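/- Fix an admissible control law and for 0 ≤ k ≤ N−1 define û(k) = E[u(k) | σ(y(0),…,y(k−2))] and ũ(k) = u(k) − û(k), and set ỹ¹(k) = y(k) − C x̂¹(k). Then for every k ≥ 1, almost surely ũ(k) = F(k) ỹ¹(k) + F¹(k) ỹ(k−1), where F¹(k) = G(k) + F(k) C (K¹(k−1) + B F(k−1)); moreover ũ(k) and û(k) are independent. -/

import Mathlib

open MeasureTheory ProbabilityTheory Matrix Finset

noncomputable section

/-- Index type for vectors partitioned into three blocks of sizes `v 0, v 1, v 2`. -/
abbrev idx (v : Fin 3 → ℕ) : Type := Σ i : Fin 3, Fin (v i)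

/-- The block-index sets `S1 = {1,3}`, `S2 = {1,2}`, `S3 = {2,3}` (0-based:
`{0,2}, {0,1}, {1,2}`). -/
def Sset : Fin 3 → Finset (Fin 3) := ![{0, 2}, {0, 1}, {1, 2}]

/-- Index type for block rows/columns restricted to the blocks in `s`. -/
abbrev ridx (v : Fin 3 → ℕ) (s : Finset (Fin 3)) : Type := {a : idx v // a.1 ∈ s}

/-- A block-partitioned matrix is block diagonal when all off-diagonal blocks vanish. -/
def BlockDiag {v w : Fin 3 → ℕ} (M : Matrix (idx v) (idx w) ℝ) : Prop :=
  ∀ a b, a.1 ≠ b.1 → M a b = 0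

/-- A block-partitioned matrix has zero blocks in positions `(1,2), (2,3), (3,1)`
(1-based), i.e. in positions `(i, i+1 mod 3)` (0-based). -/
def CyclicSparse {v w : Fin 3 → ℕ} (M : Matrix (idx v) (idx w) ℝ) : Prop :=
  ∀ a b, b.1 = a.1 + 1 → M a b = 0

/-- `[M]_{s t}`: the submatrix of the block rows in `s` and block columns in `t`. -/
def subBB {v w : Fin 3 → ℕ} (M : Matrix (idx v) (idx w) ℝ) (s t : Finset (Fin 3)) :
    Matrix (ridx v s) (ridx w t) ℝ := fun a b => M a.1 b.1

/-- `[M]_{{1,2,3} t}`: all block rows, block columns restricted to `t`. -/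
def subCols {v w : Fin 3 → ℕ} (M : Matrix (idx v) (idx w) ℝ) (t : Finset (Fin 3)) :
    Matrix (idx v) (ridx w t) ℝ := fun a b => M a b.1

/-- `[M]ᵢ`: the `i`-th block row of `M`. -/
def blockRow {v w : Fin 3 → ℕ} (M : Matrix (idx v) (idx w) ℝ) (i : Fin 3) :
    Matrix (Fin (v i)) (idx w) ℝ := fun a b => M ⟨i, a⟩ b

variable {nv qv pv : Fin 3 → ℕ}

/-- The gain `K¹` of the three-player estimator, built from the error covariance `P`: its
`i`-th block row is supported on the block columns in `Sᵢ`, where it equals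
`[A]ᵢ [P]_{{1,2,3} Sᵢ} [C]ᵀ_{SᵢSᵢ} ([C]_{SᵢSᵢ}[P]_{SᵢSᵢ}[C]ᵀ_{SᵢSᵢ} + [V]_{SᵢSᵢ})⁻¹`. -/
def K1mat (A : Matrix (idx nv) (idx nv) ℝ) (C : Matrix (idx pv) (idx nv) ℝ)
    (V : Matrix (idx pv) (idx pv) ℝ) (P : Matrix (idx nv) (idx nv) ℝ) :
    Matrix (idx nv) (idx pv) ℝ := fun a b =>
  if h : b.1 ∈ Sset a.1 then
    (blockRow A a.1 * subCols P (Sset a.1) * (subBB C (Sset a.1) (Sset a.1))ᵀ *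
      (subBB C (Sset a.1) (Sset a.1) * subBB P (Sset a.1) (Sset a.1) *
        (subBB C (Sset a.1) (Sset a.1))ᵀ + subBB V (Sset a.1) (Sset a.1))⁻¹) a.2 ⟨b, h⟩
  else 0

/-- The standard Kalman gain `K = A P Cᵀ (C P Cᵀ + V)⁻¹`. -/
def Kgain (A : Matrix (idx nv) (idx nv) ℝ) (C : Matrix (idx pv) (idx nv) ℝ)
    (V : Matrix (idx pv) (idx pv) ℝ) (P : Matrix (idx nv) (idx nv) ℝ) :
    Matrix (idx nv) (idx pv) ℝ :=
  A * P * Cᵀ * (C * P * Cᵀ + V)⁻¹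

/-- The Kalman error covariance recursion `P(0) = P0`,
`P(k+1) = A P(k) Aᵀ + W − K(k) C P(k) Aᵀ`. -/
def Pmat (A : Matrix (idx nv) (idx nv) ℝ) (C : Matrix (idx pv) (idx nv) ℝ)
    (V : Matrix (idx pv) (idx pv) ℝ) (W P0 : Matrix (idx nv) (idx nv) ℝ) :
    ℕ → Matrix (idx nv) (idx nv) ℝ
  | 0 => P0
  | k + 1 =>
      A * Pmat A C V W P0 k * Aᵀ + W -
        Kgain A C V (Pmat A C V W P0 k) * (C * Pmat A C V W P0 k * Aᵀ)

variable {Ω : Type} [MeasurableSpace Ω]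

/-- The one-step Kalman predictor `x̂(k | k−1)`: `x̂(0 | −1) = 0` and
`x̂(k+1 | k) = A x̂(k | k−1) + B u(k) + K(k)(y(k) − C x̂(k | k−1))`. -/
def xpred (A : Matrix (idx nv) (idx nv) ℝ) (B : Matrix (idx nv) (idx qv) ℝ)
    (C : Matrix (idx pv) (idx nv) ℝ) (V : Matrix (idx pv) (idx pv) ℝ)
    (W P0 : Matrix (idx nv) (idx nv) ℝ)
    (u : ℕ → Ω → idx qv → ℝ) (y : ℕ → Ω → idx pv → ℝ) :
    ℕ → Ω → idx nv → ℝ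
  | 0 => fun _ => 0
  | k + 1 => fun ω =>
      A *ᵥ xpred A B C V W P0 u y k ω + B *ᵥ u k ω +
        Kgain A C V (Pmat A C V W P0 k) *ᵥ (y k ω - C *ᵥ xpred A B C V W P0 u y k ω)

/-- The innovation `ỹ(k) = y(k) − C x̂(k | k−1)`. -/
def innov (A : Matrix (idx nv) (idx nv) ℝ) (B : Matrix (idx nv) (idx qv) ℝ)
    (C : Matrix (idx pv) (idx nv) ℝ) (V : Matrix (idx pv) (idx pv) ℝ)
    (W P0 : Matrix (idx nv) (idx nv) ℝ)
    (u : ℕ → Ω → idx qv → ℝ) (y : ℕ → Ω → idx pv → ℝ) (k : ℕ) : Ω → idx pv → ℝ :=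
  fun ω => y k ω - C *ᵥ xpred A B C V W P0 u y k ω

/-- The improved local estimate
`x̂¹(k) = A x̂(k−1 | k−2) + B u(k−1) + K¹(k−1)(y(k−1) − C x̂(k−1 | k−2))` (for `k ≥ 1`). -/
def xh1 (A : Matrix (idx nv) (idx nv) ℝ) (B : Matrix (idx nv) (idx qv) ℝ)
    (C : Matrix (idx pv) (idx nv) ℝ) (V : Matrix (idx pv) (idx pv) ℝ)
    (W P0 : Matrix (idx nv) (idx nv) ℝ)
    (u : ℕ → Ω → idx qv → ℝ) (y : ℕ → Ω → idx pv → ℝ) (k : ℕ) : Ω → idx nv → ℝ :=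
  fun ω =>
    A *ᵥ xpred A B C V W P0 u y (k - 1) ω + B *ᵥ u (k - 1) ω +
      K1mat A C V (Pmat A C V W P0 (k - 1)) *ᵥ innov A B C V W P0 u y (k - 1) ω

/-- A random vector is (jointly) Gaussian when every linear functional of it has a
(possibly degenerate) one-dimensional Gaussian distribution. -/
def IsGaussianVec {d : Type} [Fintype d] (μ : Measure Ω) (X : Ω → d → ℝ) : Prop :=
  ∀ l : d → ℝ, ∃ m s, μ.map (fun ω => ∑ i, l i * X ω i) = gaussianReal m s

/-- The standing noise assumptions: `x(0), w(0),…,w(N−1), v(0),…,v(N−1)` are measurable,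
mutually independent and Gaussian with mean zero and covariances `P0`, `W`, `V`. -/
def NoiseOK (μ : Measure Ω) (N : ℕ) (P0 W : Matrix (idx nv) (idx nv) ℝ)
    (V : Matrix (idx pv) (idx pv) ℝ) (x0 : Ω → idx nv → ℝ)
    (w : ℕ → Ω → idx nv → ℝ) (v : ℕ → Ω → idx pv → ℝ) : Prop :=
  Measurable x0 ∧ (∀ k, Measurable (w k)) ∧ (∀ k, Measurable (v k)) ∧
  iIndep (fun i : Unit ⊕ Fin N ⊕ Fin N =>
    Sum.elim (fun _ => MeasurableSpace.comap x0 inferInstance)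
      (Sum.elim (fun k : Fin N => MeasurableSpace.comap (w ↑k) inferInstance)
        (fun k : Fin N => MeasurableSpace.comap (v ↑k) inferInstance)) i) μ ∧
  IsGaussianVec μ x0 ∧ (∀ k < N, IsGaussianVec μ (w k)) ∧ (∀ k < N, IsGaussianVec μ (v k)) ∧
  (∀ i, ∫ ω, x0 ω i ∂μ = 0) ∧ (∀ i j, ∫ ω, x0 ω i * x0 ω j ∂μ = P0 i j) ∧
  (∀ k < N, ∀ i, ∫ ω, w k ω i ∂μ = 0) ∧
  (∀ k < N, ∀ i j, ∫ ω, w k ω i * w k ω j ∂μ = W i j) ∧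
  (∀ k < N, ∀ i, ∫ ω, v k ω i ∂μ = 0) ∧
  (∀ k < N, ∀ i j, ∫ ω, v k ω i * v k ω j ∂μ = V i j)

/-- The closed-loop equations induced by the admissible control law `(F, G, Φ)`:
`x(k+1) = A x(k) + B u(k) + w(k)`, `y(k) = C x(k) + v(k)`, and
`u(k) = F(k) y(k) + G(k) y(k−1) + ∑_{j ≤ k−2} Φ(k,j) y(j)` (absent terms for `k = 0`). -/
def ClosedLoop (A : Matrix (idx nv) (idx nv) ℝ) (B : Matrix (idx nv) (idx qv) ℝ)
    (C : Matrix (idx pv) (idx nv) ℝ) (x0 : Ω → idx nv → ℝ)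
    (w : ℕ → Ω → idx nv → ℝ) (v : ℕ → Ω → idx pv → ℝ)
    (F G : ℕ → Matrix (idx qv) (idx pv) ℝ) (Φ : ℕ → ℕ → Matrix (idx qv) (idx pv) ℝ)
    (x : ℕ → Ω → idx nv → ℝ) (u : ℕ → Ω → idx qv → ℝ) (y : ℕ → Ω → idx pv → ℝ) : Prop :=
  (∀ ω, x 0 ω = x0 ω) ∧
  (∀ k, ∀ ω, x (k + 1) ω = A *ᵥ x k ω + B *ᵥ u k ω + w k ω) ∧
  (∀ k, ∀ ω, y k ω = C *ᵥ x k ω + v k ω) ∧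
  (∀ k, ∀ ω, u k ω = F k *ᵥ y k ω +
    (if 1 ≤ k then G k *ᵥ y (k - 1) ω else 0) +
    ∑ j ∈ Finset.range (k - 1), Φ k j *ᵥ y j ω)

/-- Sparsity constraints of the three-player information structure: `F(k)` block diagonal
and `G(k)` with zero blocks at `(1,2), (2,3), (3,1)`. -/
def Admissible (F G : ℕ → Matrix (idx qv) (idx pv) ℝ) : Prop :=
  (∀ k, BlockDiag (F k)) ∧ (∀ k, CyclicSparse (G k))

/-- `σ(y(0), …, y(k−2))`: the common two-step-delayed information. -/
def pastSigma (y : ℕ → Ω → idx pv → ℝ) (k : ℕ) : MeasurableSpace Ω :=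
  ⨆ j ∈ Finset.range (k - 1), MeasurableSpace.comap (y j) inferInstance


set_option linter.unusedSectionVars false

/-- Coordinatewise membership of a random vector in a submodule of random variables. -/
def VM {Ω' d : Type} (S : Submodule ℝ (Ω' → ℝ)) (X : Ω' → d → ℝ) : Prop :=
  ∀ i, (fun ω => X ω i) ∈ S

lemma VM.add {Ω' d : Type} {S : Submodule ℝ (Ω' → ℝ)} {X Y : Ω' → d → ℝ}
    (hX : VM S X) (hY : VM S Y) : VM S (fun ω => X ω + Y ω) :=
  fun i => S.add_mem (hX i) (hY i)

lemma VM.sub {Ω' d : Type} {S : Submodule ℝ (Ω' → ℝ)} {X Y : Ω' → d → ℝ}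
    (hX : VM S X) (hY : VM S Y) : VM S (fun ω => X ω - Y ω) :=
  fun i => S.sub_mem (hX i) (hY i)

lemma VM.zero {Ω' d : Type} {S : Submodule ℝ (Ω' → ℝ)} :
    VM S (fun _ => (0 : d → ℝ)) :=
  fun _ => S.zero_mem

lemma VM.mulVec {Ω' d e : Type} [Fintype d] {S : Submodule ℝ (Ω' → ℝ)} {X : Ω' → d → ℝ}
    (M : Matrix e d ℝ) (hX : VM S X) : VM S (fun ω => M *ᵥ X ω) := by
  intro i
  have : (fun ω => (M *ᵥ X ω) i) = ∑ j, M i j • (fun ω => X ω j) := by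
    ext ω
    simp [Matrix.mulVec, dotProduct, Finset.sum_apply]
  rw [this]
  exact S.sum_mem fun j _ => S.smul_mem _ (hX j)

lemma VM.sum {Ω' d ι : Type} {S : Submodule ℝ (Ω' → ℝ)} (s : Finset ι) {X : ι → Ω' → d → ℝ}
    (hX : ∀ j ∈ s, VM S (X j)) : VM S (fun ω => ∑ j ∈ s, X j ω) := by
  intro i
  have : (fun ω => (∑ j ∈ s, X j ω) i) = ∑ j ∈ s, (fun ω => X j ω i) := by
    ext ω
    simp [Finset.sum_apply]
  rw [this]
  exact S.sum_mem fun j hj => hX j hj i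

lemma VM.congr {Ω' d : Type} {S : Submodule ℝ (Ω' → ℝ)} {X Y : Ω' → d → ℝ}
    (hX : VM S X) (h : ∀ ω, Y ω = X ω) : VM S Y := by
  have : Y = X := funext h
  rwa [this]

/-- The control and Kalman predictor stay in any submodule containing the past outputs. -/
lemma clos_y {A : Matrix (idx nv) (idx nv) ℝ} {B : Matrix (idx nv) (idx qv) ℝ}
    {C : Matrix (idx pv) (idx nv) ℝ} {V : Matrix (idx pv) (idx pv) ℝ}
    {W P0 : Matrix (idx nv) (idx nv) ℝ} {x0 : Ω → idx nv → ℝ}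
    {w : ℕ → Ω → idx nv → ℝ} {v : ℕ → Ω → idx pv → ℝ}
    {F G : ℕ → Matrix (idx qv) (idx pv) ℝ} {Φ : ℕ → ℕ → Matrix (idx qv) (idx pv) ℝ}
    {x : ℕ → Ω → idx nv → ℝ} {u : ℕ → Ω → idx qv → ℝ} {y : ℕ → Ω → idx pv → ℝ}
    (hcl : ClosedLoop A B C x0 w v F G Φ x u y)
    (S : Submodule ℝ (Ω → ℝ)) (k : ℕ) (hy : ∀ j < k, VM S (y j)) :
    (∀ j < k, VM S (u j)) ∧ ∀ j ≤ k, VM S (xpred A B C V W P0 u y j) := by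
  obtain ⟨-, -, -, hu⟩ := hcl
  have h1 : ∀ j < k, VM S (u j) := by
    intro j hj
    refine VM.congr ?_ (hu j)
    refine VM.add (VM.add ((hy j hj).mulVec _) ?_) (VM.sum _ fun i hi => (hy i ?_).mulVec _)
    · split_ifs
      · exact (hy _ (by omega)).mulVec _
      · exact VM.zero
    · have := Finset.mem_range.1 hi
      omega
  refine ⟨h1, fun j => ?_⟩
  induction j with
  | zero => intro _; exact VM.zero
  | succ j ih =>
    intro hj
    have hx := ih (by omega)
    exact VM.add (VM.add (hx.mulVec _) ((h1 j (by omega)).mulVec _))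
      (VM.mulVec _ ((hy j (by omega)).sub (hx.mulVec _)))

lemma clos_x {A : Matrix (idx nv) (idx nv) ℝ} {B : Matrix (idx nv) (idx qv) ℝ}
    {C : Matrix (idx pv) (idx nv) ℝ} {x0 : Ω → idx nv → ℝ}
    {w : ℕ → Ω → idx nv → ℝ} {v : ℕ → Ω → idx pv → ℝ}
    {F G : ℕ → Matrix (idx qv) (idx pv) ℝ} {Φ : ℕ → ℕ → Matrix (idx qv) (idx pv) ℝ}
    {x : ℕ → Ω → idx nv → ℝ} {u : ℕ → Ω → idx qv → ℝ} {y : ℕ → Ω → idx pv → ℝ}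
    (hcl : ClosedLoop A B C x0 w v F G Φ x u y)
    (S : Submodule ℝ (Ω → ℝ)) (a b : ℕ) (hx0 : VM S x0) (hw : ∀ j < a, VM S (w j))
    (hv : ∀ j < b, VM S (v j)) (k : ℕ) :
    (k ≤ a → k ≤ b → VM S (x k)) ∧ (k ≤ a → k < b → VM S (y k)) := by
  induction k using Nat.strong_induction_on with
  | _ k ih =>
    have hcl' := hcl
    obtain ⟨hx, hxs, hyk, hu⟩ := hcl'
    have h1 : k ≤ a → k ≤ b → VM S (x k) := by
      intro ha hb
      cases k with
      | zero => exact hx0.congr hx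
      | succ k =>
        refine VM.congr ?_ (hxs k)
        have hu' := (clos_y (V := 0) (W := 0) (P0 := 0) hcl S (k + 1)
          (fun j hj => (ih j hj).2 (by omega) (by omega))).1 k (by omega)
        exact VM.add (VM.add (((ih k (by omega)).1 (by omega) (by omega)).mulVec _)
          (hu'.mulVec _)) (hw k (by omega))
    refine ⟨h1, fun ha hb => ?_⟩
    exact VM.congr (VM.add ((h1 ha hb.le).mulVec _) (hv k hb)) (hyk k)

/-- Square integrable random variables. -/
def L2S (μ : Measure Ω) : Submodule ℝ (Ω → ℝ) where
  carrier := {f | MemLp f 2 μ}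
  add_mem' := fun hf hg => hf.add hg
  zero_mem' := MemLp.zero
  smul_mem' := fun c _ hf => hf.const_smul c

/-- Square integrable random variables orthogonal to `g`. -/
def OrthS (μ : Measure Ω) (g : Ω → ℝ) (hg : MemLp g 2 μ) : Submodule ℝ (Ω → ℝ) where
  carrier := {f | MemLp f 2 μ ∧ ∫ ω, f ω * g ω ∂μ = 0}
  add_mem' := by
    rintro f f' ⟨hf, hf0⟩ ⟨hf', hf0'⟩
    refine ⟨hf.add hf', ?_⟩
    simp only [Pi.add_apply, add_mul]
    have := integral_add (hf.integrable_mul hg) (hf'.integrable_mul hg)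
    simp only [Pi.mul_apply] at this
    rw [this, hf0, hf0', add_zero]
  zero_mem' := ⟨MemLp.zero, by simp⟩
  smul_mem' := by
    rintro c f ⟨hf, hf0⟩
    refine ⟨hf.const_smul c, ?_⟩
    simp only [Pi.smul_apply, smul_eq_mul, mul_assoc]
    rw [integral_const_mul, hf0, mul_zero]

/-- Random variables measurable with respect to `m`. -/
def MeasS {Ω' : Type} (m : MeasurableSpace Ω') : Submodule ℝ (Ω' → ℝ) where
  carrier := {f | Measurable[m] f}
  add_mem' := fun hf hg => Measurable.add hf hg
  zero_mem' := measurable_const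
  smul_mem' := fun c _ hf => Measurable.const_smul hf c

lemma VM.measurable {Ω' d : Type} {m : MeasurableSpace Ω'} {X : Ω' → d → ℝ}
    (h : VM (MeasS m) X) : Measurable[m] X :=
  measurable_pi_lambda _ fun i => h i

lemma vm_meas {Ω' d : Type} {m : MeasurableSpace Ω'} {X : Ω' → d → ℝ}
    (h : Measurable[m] X) : VM (MeasS m) X :=
  fun i => (measurable_pi_apply i).comp h

/-- Second moment matrix. -/
def Cv {d e : Type} (μ : Measure Ω) (X : Ω → d → ℝ) (Y : Ω → e → ℝ) : Matrix d e ℝ :=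
  fun i j => ∫ ω, X ω i * Y ω j ∂μ

lemma Cv_symm {d e : Type} (μ : Measure Ω) (X : Ω → d → ℝ) (Y : Ω → e → ℝ) :
    Cv μ X Y = (Cv μ Y X)ᵀ := by
  ext i j
  simp [Cv, mul_comm]

section CvLemmas
variable {d e f : Type} {μ : Measure Ω}

lemma Cv_add_left {X X' : Ω → d → ℝ} {Y : Ω → e → ℝ} (hX : VM (L2S μ) X)
    (hX' : VM (L2S μ) X') (hY : VM (L2S μ) Y) :
    Cv μ (fun ω => X ω + X' ω) Y = Cv μ X Y + Cv μ X' Y := by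
  ext i j
  simp only [Cv, Pi.add_apply, add_mul, Matrix.add_apply]
  exact integral_add (MemLp.integrable_mul (hX i) (hY j)) (MemLp.integrable_mul (hX' i) (hY j))

lemma Cv_sub_left {X X' : Ω → d → ℝ} {Y : Ω → e → ℝ} (hX : VM (L2S μ) X)
    (hX' : VM (L2S μ) X') (hY : VM (L2S μ) Y) :
    Cv μ (fun ω => X ω - X' ω) Y = Cv μ X Y - Cv μ X' Y := by
  ext i j
  simp only [Cv, Pi.sub_apply, sub_mul, Matrix.sub_apply]
  exact integral_sub (MemLp.integrable_mul (hX i) (hY j)) (MemLp.integrable_mul (hX' i) (hY j))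

lemma Cv_mulVec_left [Fintype d] {X : Ω → d → ℝ} {Y : Ω → e → ℝ} (M : Matrix f d ℝ)
    (hX : VM (L2S μ) X) (hY : VM (L2S μ) Y) :
    Cv μ (fun ω => M *ᵥ X ω) Y = M * Cv μ X Y := by
  ext i j
  simp only [Cv, Matrix.mulVec, dotProduct, Finset.sum_mul, Matrix.mul_apply, mul_assoc]
  rw [integral_finsetSum]
  · exact Finset.sum_congr rfl fun a _ => integral_const_mul _ _
  · exact fun a _ => (MemLp.integrable_mul (hX a) (hY j)).const_mul _

lemma Cv_add_right {X X' : Ω → d → ℝ} {Y : Ω → e → ℝ} (hX : VM (L2S μ) X)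
    (hX' : VM (L2S μ) X') (hY : VM (L2S μ) Y) :
    Cv μ Y (fun ω => X ω + X' ω) = Cv μ Y X + Cv μ Y X' := by
  rw [Cv_symm, Cv_add_left hX hX' hY, Matrix.transpose_add, ← Cv_symm, ← Cv_symm]

lemma Cv_sub_right {X X' : Ω → d → ℝ} {Y : Ω → e → ℝ} (hX : VM (L2S μ) X)
    (hX' : VM (L2S μ) X') (hY : VM (L2S μ) Y) :
    Cv μ Y (fun ω => X ω - X' ω) = Cv μ Y X - Cv μ Y X' := by
  rw [Cv_symm, Cv_sub_left hX hX' hY, Matrix.transpose_sub, ← Cv_symm, ← Cv_symm]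

lemma Cv_mulVec_right [Fintype d] {X : Ω → d → ℝ} {Y : Ω → e → ℝ} (M : Matrix f d ℝ)
    (hX : VM (L2S μ) X) (hY : VM (L2S μ) Y) :
    Cv μ Y (fun ω => M *ᵥ X ω) = Cv μ Y X * Mᵀ := by
  rw [Cv_symm, Cv_mulVec_left M hX hY, Matrix.transpose_mul, ← Cv_symm]

lemma Cv_posSemidef [Fintype d] {X : Ω → d → ℝ} (hX : VM (L2S μ) X) :
    (Cv μ X X).PosSemidef := by
  refine Matrix.PosSemidef.of_dotProduct_mulVec_nonneg ?_ fun z => ?_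
  · rw [Matrix.IsHermitian, Matrix.conjTranspose_eq_transpose_of_trivial, ← Cv_symm]
  · have h1 := Cv_mulVec_left (μ := μ) (Matrix.of fun (_ : Unit) => z) hX hX
    have h2 := Cv_mulVec_right (μ := μ) (Matrix.of fun (_ : Unit) => z) hX
      (hX.mulVec (Matrix.of fun (_ : Unit) => z))
    rw [h1] at h2
    have h3 := congrFun (congrFun h2 ()) ()
    have h4 : 0 ≤ Cv μ (fun ω => (Matrix.of fun (_ : Unit) => z) *ᵥ X ω)
      (fun ω => (Matrix.of fun (_ : Unit) => z) *ᵥ X ω) () () :=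
      integral_nonneg fun ω => mul_self_nonneg _
    rw [h3] at h4
    have : star z ⬝ᵥ Cv μ X X *ᵥ z = (Matrix.of (fun (_ : Unit) => z) * Cv μ X X *
      (Matrix.of fun (_ : Unit) => z)ᵀ) () () := by
      rw [Matrix.mul_assoc, Matrix.mul_apply]
      simp [dotProduct, Matrix.mulVec, Matrix.mul_apply]
    rw [this]
    exact h4

lemma Cv_zero_iff {X : Ω → d → ℝ} {Y : Ω → e → ℝ} (hX : VM (L2S μ) X) (hY : VM (L2S μ) Y) :
    Cv μ X Y = 0 ↔ ∀ j, VM (OrthS μ (fun ω => Y ω j) (hY j)) X := by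
  constructor
  · intro h j i
    exact ⟨hX i, congrFun (congrFun h i) j⟩
  · intro h
    ext i j
    exact (h j i).2

lemma Cv_zero_comm {X : Ω → d → ℝ} {Y : Ω → e → ℝ} (h : Cv μ X Y = 0) : Cv μ Y X = 0 := by
  rw [Cv_symm, h, Matrix.transpose_zero]

end CvLemmas

/-- Second-order facts about the noise. -/
structure NoiseL2 (μ : Measure Ω) (N : ℕ) (P0 W : Matrix (idx nv) (idx nv) ℝ)
    (V : Matrix (idx pv) (idx pv) ℝ) (x0 : Ω → idx nv → ℝ)
    (w : ℕ → Ω → idx nv → ℝ) (v : ℕ → Ω → idx pv → ℝ) : Prop where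
  lx : VM (L2S μ) x0
  lw : ∀ k < N, VM (L2S μ) (w k)
  lv : ∀ k < N, VM (L2S μ) (v k)
  cx : Cv μ x0 x0 = P0
  cw : ∀ k < N, Cv μ (w k) (w k) = W
  cv : ∀ k < N, Cv μ (v k) (v k) = V
  xw : ∀ k < N, Cv μ x0 (w k) = 0
  xv : ∀ k < N, Cv μ x0 (v k) = 0
  ww : ∀ j < N, ∀ k < N, j ≠ k → Cv μ (w j) (w k) = 0
  vv : ∀ j < N, ∀ k < N, j ≠ k → Cv μ (v j) (v k) = 0
  wv : ∀ j < N, ∀ k < N, Cv μ (w j) (v k) = 0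

section Kalman
variable {μ : Measure Ω} {N : ℕ}
    {A : Matrix (idx nv) (idx nv) ℝ} {B : Matrix (idx nv) (idx qv) ℝ}
    {C : Matrix (idx pv) (idx nv) ℝ} {V : Matrix (idx pv) (idx pv) ℝ}
    {W P0 : Matrix (idx nv) (idx nv) ℝ} {x0 : Ω → idx nv → ℝ}
    {w : ℕ → Ω → idx nv → ℝ} {v : ℕ → Ω → idx pv → ℝ}
    {F G : ℕ → Matrix (idx qv) (idx pv) ℝ} {Φ : ℕ → ℕ → Matrix (idx qv) (idx pv) ℝ}
    {x : ℕ → Ω → idx nv → ℝ} {u : ℕ → Ω → idx qv → ℝ} {y : ℕ → Ω → idx pv → ℝ}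

lemma l2_x (hcl : ClosedLoop A B C x0 w v F G Φ x u y) (hn : NoiseL2 μ N P0 W V x0 w v)
    (k : ℕ) (hk : k ≤ N) : VM (L2S μ) (x k) :=
  (clos_x hcl _ N N hn.lx hn.lw hn.lv k).1 hk hk

lemma l2_y (hcl : ClosedLoop A B C x0 w v F G Φ x u y) (hn : NoiseL2 μ N P0 W V x0 w v)
    (k : ℕ) (hk : k < N) : VM (L2S μ) (y k) :=
  (clos_x hcl _ N N hn.lx hn.lw hn.lv k).2 hk.le hk

lemma l2_xp (hcl : ClosedLoop A B C x0 w v F G Φ x u y) (hn : NoiseL2 μ N P0 W V x0 w v)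
    (k : ℕ) (hk : k ≤ N) : VM (L2S μ) (xpred A B C V W P0 u y k) :=
  (clos_y hcl _ N (fun j hj => l2_y hcl hn j hj)).2 k hk

lemma orth_w (hcl : ClosedLoop A B C x0 w v F G Φ x u y) (hn : NoiseL2 μ N P0 W V x0 w v)
    (k : ℕ) (hk : k < N) :
    (∀ j ≤ k, Cv μ (x j) (w k) = 0) ∧ (∀ j ≤ k, Cv μ (y j) (w k) = 0) ∧
    ∀ j ≤ k, Cv μ (xpred A B C V W P0 u y j) (w k) = 0 := by
  have key : ∀ l j, (j ≤ k → VM (OrthS μ (fun ω => w k ω l) (hn.lw k hk l)) (x j)) ∧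
      (j ≤ k → VM (OrthS μ (fun ω => w k ω l) (hn.lw k hk l)) (y j)) := by
    intro l j
    have := clos_x hcl (OrthS μ (fun ω => w k ω l) (hn.lw k hk l)) k N
      ((Cv_zero_iff hn.lx (hn.lw k hk)).1 (hn.xw k hk) l)
      (fun i hi => (Cv_zero_iff (hn.lw i (by omega)) (hn.lw k hk)).1
        (hn.ww i (by omega) k hk (by omega)) l)
      (fun i hi => (Cv_zero_iff (hn.lv i hi) (hn.lw k hk)).1
        (Cv_zero_comm (hn.wv k hk i hi)) l) j
    exact ⟨fun h => this.1 h (by omega), fun h => this.2 h (by omega)⟩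
  refine ⟨fun j hj => ?_, fun j hj => ?_, fun j hj => ?_⟩
  · exact (Cv_zero_iff (l2_x hcl hn j (by omega)) (hn.lw k hk)).2 fun l => (key l j).1 hj
  · exact (Cv_zero_iff (l2_y hcl hn j (by omega)) (hn.lw k hk)).2 fun l => (key l j).2 hj
  · exact (Cv_zero_iff (l2_xp hcl hn j (by omega)) (hn.lw k hk)).2 fun l =>
      (clos_y hcl _ k (fun i hi => (key l i).2 hi.le)).2 j hj

lemma orth_v (hcl : ClosedLoop A B C x0 w v F G Φ x u y) (hn : NoiseL2 μ N P0 W V x0 w v)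
    (k : ℕ) (hk : k < N) :
    (∀ j ≤ k, Cv μ (x j) (v k) = 0) ∧ (∀ j < k, Cv μ (y j) (v k) = 0) ∧
    ∀ j ≤ k, Cv μ (xpred A B C V W P0 u y j) (v k) = 0 := by
  have key : ∀ l j, (j ≤ k → VM (OrthS μ (fun ω => v k ω l) (hn.lv k hk l)) (x j)) ∧
      (j < k → VM (OrthS μ (fun ω => v k ω l) (hn.lv k hk l)) (y j)) := by
    intro l j
    have := clos_x hcl (OrthS μ (fun ω => v k ω l) (hn.lv k hk l)) N k
      ((Cv_zero_iff hn.lx (hn.lv k hk)).1 (hn.xv k hk) l)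
      (fun i hi => (Cv_zero_iff (hn.lw i hi) (hn.lv k hk)).1 (hn.wv i hi k hk) l)
      (fun i hi => (Cv_zero_iff (hn.lv i (by omega)) (hn.lv k hk)).1
        (hn.vv i (by omega) k hk (by omega)) l) j
    exact ⟨fun h => this.1 (by omega) h, fun h => this.2 (by omega) h⟩
  refine ⟨fun j hj => ?_, fun j hj => ?_, fun j hj => ?_⟩
  · exact (Cv_zero_iff (l2_x hcl hn j (by omega)) (hn.lv k hk)).2 fun l => (key l j).1 hj
  · exact (Cv_zero_iff (l2_y hcl hn j (by omega)) (hn.lv k hk)).2 fun l => (key l j).2 hj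
  · exact (Cv_zero_iff (l2_xp hcl hn j (by omega)) (hn.lv k hk)).2 fun l =>
      (clos_y hcl _ k (fun i hi => (key l i).2 hi)).2 j hj

/-- The Kalman filter: error covariance and orthogonality to past outputs. -/
lemma kalman (hV : V.PosDef) (hcl : ClosedLoop A B C x0 w v F G Φ x u y)
    (hn : NoiseL2 μ N P0 W V x0 w v) (k : ℕ) (hk : k ≤ N) :
    Cv μ (fun ω => x k ω - xpred A B C V W P0 u y k ω)
      (fun ω => x k ω - xpred A B C V W P0 u y k ω) = Pmat A C V W P0 k ∧
    ∀ j < k, Cv μ (fun ω => x k ω - xpred A B C V W P0 u y k ω) (y j) = 0 := by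
  induction k with
  | zero =>
    refine ⟨?_, fun j hj => absurd hj (by omega)⟩
    have : (fun ω => x 0 ω - xpred A B C V W P0 u y 0 ω) = x0 := by
      funext ω
      simp [xpred, hcl.1]
    rw [this, hn.cx]
    rfl
  | succ k ih =>
    obtain ⟨ihP, ihO⟩ := ih (by omega)
    have hkN : k < N := by omega
    have lxp := l2_xp hcl hn k hkN.le
    have le : VM (L2S μ) (fun ω => x k ω - xpred A B C V W P0 u y k ω) :=
      (l2_x hcl hn k hkN.le).sub lxp
    have lw := hn.lw k hkN
    have lv := hn.lv k hkN
    obtain ⟨xw, yw, xpw⟩ := orth_w hcl hn k hkN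
    obtain ⟨xv, yv, xpv⟩ := orth_v hcl hn k hkN
    have ew : Cv μ (fun ω => x k ω - xpred A B C V W P0 u y k ω) (w k) = 0 := by
      rw [Cv_sub_left (l2_x hcl hn k hkN.le) lxp lw, xw k le_rfl, xpw k le_rfl, sub_zero]
    have ev : Cv μ (fun ω => x k ω - xpred A B C V W P0 u y k ω) (v k) = 0 := by
      rw [Cv_sub_left (l2_x hcl hn k hkN.le) lxp lv, xv k le_rfl, xpv k le_rfl, sub_zero]
    have exp : Cv μ (fun ω => x k ω - xpred A B C V W P0 u y k ω)
        (xpred A B C V W P0 u y k) = 0 := by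
      apply Cv_zero_comm
      refine (Cv_zero_iff lxp le).2 fun l => ?_
      refine (clos_y hcl _ k (fun i hi => ?_)).2 k le_rfl
      exact (Cv_zero_iff (l2_y hcl hn i (by omega)) le).1 (Cv_zero_comm (ihO i hi)) l
    have hew : ∀ ω, x (k + 1) ω - xpred A B C V W P0 u y (k + 1) ω =
        (A *ᵥ (x k ω - xpred A B C V W P0 u y k ω) + w k ω) -
        Kgain A C V (Pmat A C V W P0 k) *ᵥ
          (C *ᵥ (x k ω - xpred A B C V W P0 u y k ω) + v k ω) := by
      intro ω
      rw [hcl.2.1, xpred]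
      beta_reduce
      rw [hcl.2.2.1]
      simp only [Matrix.mulVec_sub, Matrix.mulVec_add]
      abel
    have hyw : y k = fun ω => C *ᵥ xpred A B C V W P0 u y k ω +
          (C *ᵥ (x k ω - xpred A B C V W P0 u y k ω) + v k ω) := by
      funext ω
      rw [hcl.2.2.1, Matrix.mulVec_sub]
      abel
    have hE : (fun ω => x (k + 1) ω - xpred A B C V W P0 u y (k + 1) ω) = fun ω =>
        (A *ᵥ (x k ω - xpred A B C V W P0 u y k ω) + w k ω) -
        Kgain A C V (Pmat A C V W P0 k) *ᵥ
          (C *ᵥ (x k ω - xpred A B C V W P0 u y k ω) + v k ω) := funext hew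
    have hS : (C * Pmat A C V W P0 k * Cᵀ + V).PosDef := by
      have h1 := (Cv_posSemidef le).mul_mul_conjTranspose_same C
      rw [ihP, Matrix.conjTranspose_eq_transpose_of_trivial] at h1
      exact hV.posSemidef_add h1
    have hP : Pmat A C V W P0 (k + 1) = A * Pmat A C V W P0 k * Aᵀ + W -
        Kgain A C V (Pmat A C V W P0 k) * (C * Pmat A C V W P0 k * Aᵀ) := rfl
    have hKS : Kgain A C V (Pmat A C V W P0 k) * (C * Pmat A C V W P0 k * Cᵀ + V) =
        A * Pmat A C V W P0 k * Cᵀ := by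
      rw [Kgain, Matrix.mul_assoc, Matrix.nonsing_inv_mul _
        ((Matrix.isUnit_iff_isUnit_det _).1 hS.isUnit), Matrix.mul_one]
    rw [hE, hP]
    generalize Kgain A C V (Pmat A C V W P0 k) = K at *
    generalize hPk : Pmat A C V W P0 k = P at *
    generalize hek : (fun ω => x k ω - xpred A B C V W P0 u y k ω) = e at *
    have hek' : ∀ ω, x k ω - xpred A B C V W P0 u y k ω = e ω := fun ω => by rw [← hek]
    simp only [hek'] at hyw ⊢
    have lCe : VM (L2S μ) (fun ω => C *ᵥ e ω) := le.mulVec C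
    have lAe : VM (L2S μ) (fun ω => A *ᵥ e ω) := le.mulVec A
    have lr : VM (L2S μ) (fun ω => C *ᵥ e ω + v k ω) := lCe.add lv
    have lq : VM (L2S μ) (fun ω => A *ᵥ e ω + w k ω) := lAe.add lw
    have lKr : VM (L2S μ) (fun ω => K *ᵥ (C *ᵥ e ω + v k ω)) := lr.mulVec K
    have ln : VM (L2S μ) (fun ω => A *ᵥ e ω + w k ω - K *ᵥ (C *ᵥ e ω + v k ω)) := lq.sub lKr
    -- general left expansion
    have left : ∀ {d : Type} (Z : Ω → d → ℝ), VM (L2S μ) Z →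
        Cv μ (fun ω => A *ᵥ e ω + w k ω - K *ᵥ (C *ᵥ e ω + v k ω)) Z =
        A * Cv μ e Z + Cv μ (w k) Z - K * (C * Cv μ e Z + Cv μ (v k) Z) := by
      intro d Z hZ
      rw [Cv_sub_left lq lKr hZ, Cv_add_left lAe lw hZ, Cv_mulVec_left A le hZ,
        Cv_mulVec_left K lr hZ, Cv_add_left lCe lv hZ, Cv_mulVec_left C le hZ]
    have nr : Cv μ (fun ω => A *ᵥ e ω + w k ω - K *ᵥ (C *ᵥ e ω + v k ω))
        (fun ω => C *ᵥ e ω + v k ω) = 0 := by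
      rw [left _ lr, Cv_add_right lCe lv le, Cv_add_right lCe lv lw, Cv_add_right lCe lv lv,
        Cv_mulVec_right C le le, Cv_mulVec_right C le lw, Cv_mulVec_right C le lv, ihP, ev,
        Cv_zero_comm ew, hn.wv k hkN k hkN, Cv_zero_comm ev, hn.cv k hkN]
      simp only [add_zero, Matrix.zero_mul, zero_add]
      rw [← Matrix.mul_assoc C, hKS, ← Matrix.mul_assoc, sub_self]
    refine ⟨?_, fun j hj => ?_⟩
    · rw [Cv_sub_right lq lKr ln, Cv_mulVec_right K lr ln, nr, Matrix.zero_mul, sub_zero,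
        Cv_add_right lAe lw ln, Cv_mulVec_right A le ln, left _ le, left _ lw, ihP, ew,
        hn.cw k hkN, Cv_zero_comm ew, Cv_zero_comm ev, Cv_zero_comm (hn.wv k hkN k hkN)]
      simp only [Matrix.mul_zero, add_zero, sub_zero, zero_add, Matrix.sub_mul, Matrix.mul_assoc]
      abel
    · rcases Nat.lt_succ_iff_lt_or_eq.1 hj with hj | rfl
      · have ly := l2_y hcl hn j (by omega)
        rw [left _ ly, ihO j hj, Cv_zero_comm (yw j hj.le), Cv_zero_comm (yv j hj)]
        simp
      · rw [hyw, Cv_add_right (lxp.mulVec C) lr ln, nr, Cv_mulVec_right C lxp ln, left _ lxp, exp,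
          Cv_zero_comm (xpw j le_rfl), Cv_zero_comm (xpv j le_rfl)]
        simp

end Kalman

/-- Linear functionals of a random vector. -/
def LinS {Ω' E : Type} [NormedAddCommGroup E] [NormedSpace ℝ E] (Z : Ω' → E) :
    Submodule ℝ (Ω' → ℝ) where
  carrier := {f | ∃ L : E →L[ℝ] ℝ, f = fun ω => L (Z ω)}
  add_mem' := by
    rintro _ _ ⟨L, rfl⟩ ⟨L', rfl⟩
    exact ⟨L + L', rfl⟩
  zero_mem' := ⟨0, rfl⟩
  smul_mem' := by
    rintro c _ ⟨L, rfl⟩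
    exact ⟨c • L, rfl⟩

lemma linS_gauss {μ : Measure Ω} {E d e : Type} [Fintype d] [Fintype e]
    [NormedAddCommGroup E] [NormedSpace ℝ E] [MeasurableSpace E] [BorelSpace E] {Z : Ω → E}
    (hZ : HasGaussianLaw Z μ) {X : Ω → d → ℝ} {Y : Ω → e → ℝ}
    (hX : VM (LinS Z) X) (hY : VM (LinS Z) Y) :
    HasGaussianLaw (fun ω => (fun i => X ω i, fun j => Y ω j)) μ := by
  choose L hL using hX
  choose L' hL' using hY
  have := hZ.map_fun ((ContinuousLinearMap.pi L).prod (ContinuousLinearMap.pi L'))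
  refine this.congr (Filter.Eventually.of_forall fun ω => ?_)
  symm
  refine Prod.ext ?_ ?_
  · funext i
    exact congrFun (hL i) ω
  · funext i
    exact congrFun (hL' i) ω

/-- All the noise, put in a common space. -/
def nz (N : ℕ) (x0 : Ω → idx nv → ℝ) (w : ℕ → Ω → idx nv → ℝ) (v : ℕ → Ω → idx pv → ℝ) :
    (Unit ⊕ Fin N ⊕ Fin N) → Ω → (idx nv ⊕ idx pv) → ℝ
  | .inl _ => fun ω => Sum.elim (x0 ω) 0
  | .inr (.inl k) => fun ω => Sum.elim (w k ω) 0
  | .inr (.inr k) => fun ω => Sum.elim 0 (v k ω)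

lemma hasGaussianLaw_of_vec {d : Type} [Fintype d] {μ : Measure Ω}
    {X : Ω → d → ℝ} (hm : Measurable X) (h : IsGaussianVec μ X) : HasGaussianLaw X μ := by
  classical
  refine ⟨isGaussian_of_map_eq_gaussianReal fun L => ?_⟩
  obtain ⟨m, s, hms⟩ := h (fun i => L (Pi.single i 1))
  refine ⟨m, s, ?_⟩
  rw [Measure.map_map L.continuous.measurable hm, ← hms]
  congr 1
  funext ω
  simp only [Function.comp]
  conv_lhs => rw [pi_eq_sum_univ' (X ω)]
  simp [mul_comm]

lemma meas_elim_left {X : Ω → idx nv → ℝ} {m : MeasurableSpace Ω} (h : Measurable[m] X) :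
    Measurable[m] (fun ω => (Sum.elim (X ω) 0 : idx nv ⊕ idx pv → ℝ)) := by
  refine measurable_pi_lambda _ fun i => ?_
  rcases i with i | i
  · exact (measurable_pi_apply i).comp h
  · exact measurable_const

lemma meas_elim_right {X : Ω → idx pv → ℝ} {m : MeasurableSpace Ω} (h : Measurable[m] X) :
    Measurable[m] (fun ω => (Sum.elim 0 (X ω) : idx nv ⊕ idx pv → ℝ)) := by
  refine measurable_pi_lambda _ fun i => ?_
  rcases i with i | i
  · exact measurable_const
  · exact (measurable_pi_apply i).comp h

lemma gauss_elim_left {μ : Measure Ω} {X : Ω → idx nv → ℝ} (h : IsGaussianVec μ X) :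
    IsGaussianVec μ (fun ω => (Sum.elim (X ω) 0 : idx nv ⊕ idx pv → ℝ)) := by
  intro l
  obtain ⟨m, s, h⟩ := h (fun i => l (.inl i))
  exact ⟨m, s, by simpa [Fintype.sum_sum_type] using h⟩

lemma gauss_elim_right {μ : Measure Ω} {X : Ω → idx pv → ℝ} (h : IsGaussianVec μ X) :
    IsGaussianVec μ (fun ω => (Sum.elim 0 (X ω) : idx nv ⊕ idx pv → ℝ)) := by
  intro l
  obtain ⟨m, s, h⟩ := h (fun i => l (.inr i))
  exact ⟨m, s, by simpa [Fintype.sum_sum_type] using h⟩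

section NoiseSec
variable {μ : Measure Ω} [IsProbabilityMeasure μ] {N : ℕ} {P0 W : Matrix (idx nv) (idx nv) ℝ}
    {V : Matrix (idx pv) (idx pv) ℝ} {x0 : Ω → idx nv → ℝ}
    {w : ℕ → Ω → idx nv → ℝ} {v : ℕ → Ω → idx pv → ℝ}

lemma nz_gauss (h : NoiseOK μ N P0 W V x0 w v) (i : Unit ⊕ Fin N ⊕ Fin N) :
    HasGaussianLaw (nz N x0 w v i) μ := by
  obtain ⟨mx, mw, mv, -, gx, gw, gv, -⟩ := h
  rcases i with i | i | i
  · exact hasGaussianLaw_of_vec (meas_elim_left mx) (gauss_elim_left gx)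
  · exact hasGaussianLaw_of_vec (meas_elim_left (mw i)) (gauss_elim_left (gw i i.2))
  · exact hasGaussianLaw_of_vec (meas_elim_right (mv i)) (gauss_elim_right (gv i i.2))

lemma nz_indep (h : NoiseOK μ N P0 W V x0 w v) : iIndepFun (nz N x0 w v) μ := by
  obtain ⟨mx, mw, mv, hi, -⟩ := h
  rw [iIndepFun_iff_iIndep]
  refine iIndep_of_iIndep_of_le hi fun i => ?_
  rcases i with i | i | i
  · exact (meas_elim_left (comap_measurable x0)).comap_le
  · exact (meas_elim_left (comap_measurable (w i))).comap_le
  · exact (meas_elim_right (comap_measurable (v i))).comap_le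

lemma nz_joint (h : NoiseOK μ N P0 W V x0 w v) :
    HasGaussianLaw (fun ω i => nz N x0 w v i ω) μ :=
  (nz_indep h).hasGaussianLaw (nz_gauss h)

lemma nz_mean (h : NoiseOK μ N P0 W V x0 w v) (i : Unit ⊕ Fin N ⊕ Fin N)
    (a : idx nv ⊕ idx pv) : ∫ ω, nz N x0 w v i ω a ∂μ = 0 := by
  obtain ⟨-, -, -, -, -, -, -, ex, -, ew, -, ev, -⟩ := h
  rcases i with i | i | i <;> rcases a with a | a <;> simp [nz]
  · exact ex a
  · exact ew i i.2 a
  · exact ev i i.2 a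

lemma nz_l2 (h : NoiseOK μ N P0 W V x0 w v) (i : Unit ⊕ Fin N ⊕ Fin N)
    (a : idx nv ⊕ idx pv) : MemLp (fun ω => nz N x0 w v i ω a) 2 μ :=
  ((nz_gauss h i).map_fun (ContinuousLinearMap.proj a)).memLp_two

lemma nz_orth (h : NoiseOK μ N P0 W V x0 w v) (i j : Unit ⊕ Fin N ⊕ Fin N) (hij : i ≠ j)
    (a b : idx nv ⊕ idx pv) : ∫ ω, nz N x0 w v i ω a * nz N x0 w v j ω b ∂μ = 0 := by
  have h1 := ((nz_indep h).indepFun hij).comp (measurable_pi_apply a) (measurable_pi_apply b)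
  have h2 := h1.integral_fun_mul_eq_mul_integral (nz_l2 h i a).1 (nz_l2 h j b).1
  simp only [Function.comp] at h2
  rw [h2, nz_mean h i a, zero_mul]

lemma noiseL2 (h : NoiseOK μ N P0 W V x0 w v) : NoiseL2 μ N P0 W V x0 w v := by
  have h' := h
  obtain ⟨-, -, -, -, -, -, -, -, cx, -, cw, -, cv⟩ := h'
  refine ⟨fun a => nz_l2 h (.inl ()) (.inl a), fun k hk a => nz_l2 h (.inr (.inl ⟨k, hk⟩)) (.inl a),
    fun k hk a => nz_l2 h (.inr (.inr ⟨k, hk⟩)) (.inr a), ?_, ?_, ?_, ?_, ?_, ?_, ?_, ?_⟩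
  · ext a b
    exact cx a b
  · intro k hk
    ext a b
    exact cw k hk a b
  · intro k hk
    ext a b
    exact cv k hk a b
  · intro k hk
    ext a b
    exact nz_orth h (.inl ()) (.inr (.inl ⟨k, hk⟩)) (by simp) (.inl a) (.inl b)
  · intro k hk
    ext a b
    exact nz_orth h (.inl ()) (.inr (.inr ⟨k, hk⟩)) (by simp) (.inl a) (.inr b)
  · intro j hj k hk hjk
    ext a b
    exact nz_orth h (.inr (.inl ⟨j, hj⟩)) (.inr (.inl ⟨k, hk⟩)) (by simpa using hjk) (.inl a) (.inl b)
  · intro j hj k hk hjk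
    ext a b
    exact nz_orth h (.inr (.inr ⟨j, hj⟩)) (.inr (.inr ⟨k, hk⟩)) (by simpa using hjk) (.inr a) (.inr b)
  · intro j hj k hk
    ext a b
    exact nz_orth h (.inr (.inl ⟨j, hj⟩)) (.inr (.inr ⟨k, hk⟩)) (by simp) (.inl a) (.inr b)

lemma lin_nz (i : Unit ⊕ Fin N ⊕ Fin N) (a : idx nv ⊕ idx pv) :
    (fun ω => nz N x0 w v i ω a) ∈ LinS (fun ω i => nz N x0 w v i ω) :=
  ⟨(ContinuousLinearMap.proj (R := ℝ) (φ := fun _ : idx nv ⊕ idx pv => ℝ) a).comp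
    (ContinuousLinearMap.proj (R := ℝ)
      (φ := fun _ : Unit ⊕ Fin N ⊕ Fin N => idx nv ⊕ idx pv → ℝ) i), rfl⟩

end NoiseSec

/-- Integrable random variables with zero mean. -/
def MeanS (μ : Measure Ω) : Submodule ℝ (Ω → ℝ) where
  carrier := {f | Integrable f μ ∧ ∫ ω, f ω ∂μ = 0}
  add_mem' := by
    rintro f g ⟨hf, hf0⟩ ⟨hg, hg0⟩
    refine ⟨hf.add hg, ?_⟩
    simp only [Pi.add_apply]
    rw [integral_add hf hg, hf0, hg0, add_zero]
  zero_mem' := ⟨integrable_zero _ _ _, by simp⟩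
  smul_mem' := by
    rintro c f ⟨hf, hf0⟩
    refine ⟨hf.smul c, ?_⟩
    simp only [Pi.smul_apply, smul_eq_mul]
    rw [integral_const_mul, hf0, mul_zero]

/-- The abstract conclusion: a decomposition into a past-measurable part and an independent
zero-mean part. -/
lemma cond_of_indep {Ω' d e : Type} [Fintype d] [Fintype e]
    (m : MeasurableSpace Ω') [m0 : MeasurableSpace Ω'] {μ : Measure Ω'} [IsProbabilityMeasure μ]
    {U R S : Ω' → d → ℝ} {Y : Ω' → e → ℝ}
    (hm : m ≤ m0) (hmY : m ≤ MeasurableSpace.comap Y inferInstance)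
    (hU : ∀ ω, U ω = R ω + S ω) (hR : Measurable R) (hR0 : VM (MeanS μ) R)
    (hSi : VM (MeanS μ) S) (hS : Measurable[m] S) (hind : IndepFun R Y μ) :
    ((fun ω => U ω - (μ[U | m]) ω) =ᵐ[μ] R) ∧
    IndepFun (fun ω => U ω - (μ[U | m]) ω) (μ[U | m]) μ := by
  have hRint : Integrable R μ := Integrable.of_eval fun i => (hR0 i).1
  have hSint : Integrable S μ := Integrable.of_eval fun i => (hSi i).1
  have hUeq : U = R + S := funext hU
  have hind' : Indep (MeasurableSpace.comap R inferInstance) m μ :=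
    indep_of_indep_of_le_right ((IndepFun_iff_Indep _ _ _).1 hind) hmY
  have h1 : μ[R | m] =ᵐ[μ] fun _ => ∫ ω, R ω ∂μ :=
    condExp_indep_eq hR.comap_le hm (comap_measurable R).stronglyMeasurable hind'
  have h0 : ∫ ω, R ω ∂μ = 0 := by
    funext i
    rw [eval_integral (fun i => (hR0 i).1)]
    exact (hR0 i).2
  have h2 : μ[S | m] = S := condExp_of_stronglyMeasurable hm hS.stronglyMeasurable hSint
  have h3 : μ[U | m] =ᵐ[μ] S := by
    rw [hUeq]
    filter_upwards [condExp_add hRint hSint m, h1] with ω ha hb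
    rw [ha, Pi.add_apply, hb, h2, h0, zero_add]
  have h4 : (fun ω => U ω - (μ[U | m]) ω) =ᵐ[μ] R := by
    filter_upwards [h3] with ω ha
    rw [ha, hU, add_sub_cancel_right]
  refine ⟨h4, IndepFun.congr ?_ h4.symm h3.symm⟩
  rw [IndepFun_iff_Indep]
  exact indep_of_indep_of_le_right hind' hS.comap_le
/-- with `û(k) = E[u(k) | σ(y(0),…,y(k−2))]`, `ũ(k) = u(k) − û(k)` and
`ỹ¹(k) = y(k) − C x̂¹(k)`, for every `k ≥ 1` one has almost surely
`ũ(k) = F(k) ỹ¹(k) + F¹(k) ỹ(k−1)` with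
`F¹(k) = G(k) + F(k) C (K¹(k−1) + B F(k−1))`; moreover `ũ(k)` and `û(k)` are
independent. -/
theorem stmt5 {nv qv pv : Fin 3 → ℕ} {Ω : Type} [MeasurableSpace Ω]
    (μ : Measure Ω) [IsProbabilityMeasure μ] (N : ℕ)
    (A : Matrix (idx nv) (idx nv) ℝ) (B : Matrix (idx nv) (idx qv) ℝ)
    (C : Matrix (idx pv) (idx nv) ℝ)
    (hA : CyclicSparse A) (hB : BlockDiag B) (hC : BlockDiag C)
    (P0 W : Matrix (idx nv) (idx nv) ℝ) (V : Matrix (idx pv) (idx pv) ℝ)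
    (hV : V.PosDef)
    (x0 : Ω → idx nv → ℝ) (w : ℕ → Ω → idx nv → ℝ) (v : ℕ → Ω → idx pv → ℝ)
    (hnoise : NoiseOK μ N P0 W V x0 w v)
    (F G : ℕ → Matrix (idx qv) (idx pv) ℝ) (Φ : ℕ → ℕ → Matrix (idx qv) (idx pv) ℝ)
    (hadm : Admissible F G)
    (x : ℕ → Ω → idx nv → ℝ) (u : ℕ → Ω → idx qv → ℝ) (y : ℕ → Ω → idx pv → ℝ)
    (hcl : ClosedLoop A B C x0 w v F G Φ x u y) :
    ∀ k, 1 ≤ k → k < N →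
      ((fun ω => u k ω - (μ[u k | pastSigma y k]) ω) =ᵐ[μ]
        (fun ω => F k *ᵥ (y k ω - C *ᵥ xh1 A B C V W P0 u y k ω) +
          (G k + F k * C * (K1mat A C V (Pmat A C V W P0 (k - 1)) + B * F (k - 1))) *ᵥ
            innov A B C V W P0 u y (k - 1) ω)) ∧
      IndepFun (fun ω => u k ω - (μ[u k | pastSigma y k]) ω)
        (μ[u k | pastSigma y k]) μ := by
  intro k hk1 hkN
  obtain ⟨n, rfl⟩ : ∃ n, k = n + 1 := ⟨k - 1, by omega⟩
  have hn := noiseL2 hnoise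
  have hcl' := hcl
  obtain ⟨-, hxs, hys, hus⟩ := hcl'
  simp only [Nat.add_sub_cancel]
  set R : Ω → idx qv → ℝ := fun ω => F (n + 1) *ᵥ
      (y (n + 1) ω - C *ᵥ xh1 A B C V W P0 u y (n + 1) ω) +
      (G (n + 1) + F (n + 1) * C * (K1mat A C V (Pmat A C V W P0 n) + B * F n)) *ᵥ
        innov A B C V W P0 u y n ω with hRdef
  -- expression of the residual through the noise
  have hR1 : ∀ ω, innov A B C V W P0 u y n ω =
      C *ᵥ (x n ω - xpred A B C V W P0 u y n ω) + v n ω := by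
    intro ω
    rw [innov, hys, Matrix.mulVec_sub]
    abel
  have hR2 : ∀ ω, R ω = F (n + 1) *ᵥ (C *ᵥ (A *ᵥ (x n ω - xpred A B C V W P0 u y n ω) + w n ω) +
      v (n + 1) ω - C *ᵥ (K1mat A C V (Pmat A C V W P0 n) *ᵥ
        (C *ᵥ (x n ω - xpred A B C V W P0 u y n ω) + v n ω))) +
      (G (n + 1) + F (n + 1) * C * (K1mat A C V (Pmat A C V W P0 n) + B * F n)) *ᵥ
        (C *ᵥ (x n ω - xpred A B C V W P0 u y n ω) + v n ω) := by
    intro ω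
    have : y (n + 1) ω - C *ᵥ xh1 A B C V W P0 u y (n + 1) ω =
        C *ᵥ (A *ᵥ (x n ω - xpred A B C V W P0 u y n ω) + w n ω) +
      v (n + 1) ω - C *ᵥ (K1mat A C V (Pmat A C V W P0 n) *ᵥ
        (C *ᵥ (x n ω - xpred A B C V W P0 u y n ω) + v n ω)) := by
      rw [xh1, Nat.add_sub_cancel, hR1, hys, hxs]
      simp only [Matrix.mulVec_sub, Matrix.mulVec_add]
      abel
    simp only [hRdef]
    rw [this, hR1]
  -- the predictable part
  have hS2 : ∀ ω, u (n + 1) ω - R ω = F (n + 1) *ᵥ (C *ᵥ (A *ᵥ xpred A B C V W P0 u y n ω +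
      B *ᵥ (F n *ᵥ (C *ᵥ xpred A B C V W P0 u y n ω) +
        (if 1 ≤ n then G n *ᵥ y (n - 1) ω else 0) +
        ∑ j ∈ Finset.range (n - 1), Φ n j *ᵥ y j ω))) +
      G (n + 1) *ᵥ (C *ᵥ xpred A B C V W P0 u y n ω) +
      ∑ j ∈ Finset.range n, Φ (n + 1) j *ᵥ y j ω := by
    intro ω
    have h1 : (if 1 ≤ n then G n *ᵥ y (n - 1) ω else 0) +
        ∑ j ∈ Finset.range (n - 1), Φ n j *ᵥ y j ω = u n ω - F n *ᵥ y n ω := by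
      rw [hus n ω]
      abel
    rw [add_assoc (F n *ᵥ _), h1, hus (n + 1) ω, if_pos (by omega)]
    simp only [hRdef, xh1, innov, Nat.add_sub_cancel, Matrix.mulVec_sub, Matrix.mulVec_add,
      Matrix.add_mulVec, ← Matrix.mulVec_mulVec]
    abel
  -- closure in any submodule containing the noise
  have gen : ∀ T : Submodule ℝ (Ω → ℝ), VM T x0 → (∀ j < N, VM T (w j)) →
      (∀ j < N, VM T (v j)) → (∀ j < N, VM T (y j)) ∧ VM T R ∧
        VM T (fun ω => u (n + 1) ω - R ω) := by
    intro T tx tw tv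
    have ty : ∀ j < N, VM T (y j) := fun j hj => (clos_x hcl T N N tx tw tv j).2 hj.le hj
    have te : VM T (fun ω => x n ω - xpred A B C V W P0 u y n ω) :=
      ((clos_x hcl T N N tx tw tv n).1 (by omega) (by omega)).sub
        ((clos_y hcl T N ty).2 n (by omega))
    have ti := (te.mulVec C).add (tv n (by omega))
    have tR : VM T R := VM.congr (VM.add (VM.mulVec _ (VM.sub (VM.add (VM.mulVec _
      (VM.add (te.mulVec A) (tw n (by omega)))) (tv (n + 1) hkN))
      (VM.mulVec _ (VM.mulVec _ ti)))) (VM.mulVec _ ti)) hR2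
    exact ⟨ty, tR, ((clos_y (V := V) (W := W) (P0 := P0) hcl T N ty).1 (n + 1) hkN).sub tR⟩
  have genLin := gen (LinS (fun ω i => nz N x0 w v i ω))
    (fun a => lin_nz (.inl ()) (.inl a))
    (fun j hj a => lin_nz (.inr (.inl ⟨j, hj⟩)) (.inl a))
    (fun j hj a => lin_nz (.inr (.inr ⟨j, hj⟩)) (.inr a))
  have genMean := gen (MeanS μ)
    (fun a => ⟨(nz_l2 hnoise (.inl ()) (.inl a)).integrable (by norm_num),
      nz_mean hnoise (.inl ()) (.inl a)⟩)
    (fun j hj a => ⟨(nz_l2 hnoise (.inr (.inl ⟨j, hj⟩)) (.inl a)).integrable (by norm_num),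
      nz_mean hnoise (.inr (.inl ⟨j, hj⟩)) (.inl a)⟩)
    (fun j hj a => ⟨(nz_l2 hnoise (.inr (.inr ⟨j, hj⟩)) (.inr a)).integrable (by norm_num),
      nz_mean hnoise (.inr (.inr ⟨j, hj⟩)) (.inr a)⟩)
  have genMeas := gen (MeasS inferInstance) (vm_meas hnoise.1)
    (fun j _ => vm_meas (hnoise.2.1 j)) (fun j _ => vm_meas (hnoise.2.2.1 j))
  have genL2 := gen (L2S μ) hn.lx hn.lw hn.lv
  -- orthogonality
  have lxp := l2_xp hcl hn n (by omega)
  have le : VM (L2S μ) (fun ω => x n ω - xpred A B C V W P0 u y n ω) :=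
    (l2_x hcl hn n (by omega)).sub lxp
  have horth : ∀ j < n, ∀ l i, ∫ ω, R ω i * y j ω l ∂μ = 0 := by
    intro j hj l i
    have ly := l2_y hcl hn j (by omega)
    have te := (Cv_zero_iff le ly).1 ((kalman hV hcl hn n (by omega)).2 j hj) l
    have tw := (Cv_zero_iff (hn.lw n (by omega)) ly).1
      (Cv_zero_comm ((orth_w hcl hn n (by omega)).2.1 j hj.le)) l
    have tv := (Cv_zero_iff (hn.lv n (by omega)) ly).1
      (Cv_zero_comm ((orth_v hcl hn n (by omega)).2.1 j hj)) l
    have tv' := (Cv_zero_iff (hn.lv (n + 1) hkN) ly).1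
      (Cv_zero_comm ((orth_v hcl hn (n + 1) hkN).2.1 j (by omega))) l
    have ti := (te.mulVec C).add tv
    exact (VM.congr (VM.add (VM.mulVec _ (VM.sub (VM.add (VM.mulVec _
      (VM.add (te.mulVec A) tw)) tv')
      (VM.mulVec _ (VM.mulVec _ ti)))) (VM.mulVec _ ti)) hR2 i).2
  -- the joint past
  set Y : Ω → (Fin n × idx pv) → ℝ := fun ω a => y a.1 ω a.2 with hY
  have hind : IndepFun R Y μ := by
    have hg := linS_gauss (nz_joint hnoise) (X := R) (Y := Y) genLin.2.1
      (fun a => genLin.1 a.1 (by have := a.1.2; omega) a.2)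
    refine hg.indepFun_of_covariance_eval (X := fun i ω => R ω i) (Y := fun a ω => Y ω a)
      fun i a => ?_
    rw [covariance_eq_sub (genL2.2.1 i) (genL2.1 a.1 (by have := a.1.2; omega) a.2)]
    have h1 := horth a.1 a.1.2 a.2 i
    have h2 := (genMean.2.1 i).2
    simp only [Pi.mul_apply, hY]
    rw [h1, h2]
    simp
  have hpast : ∀ j < n, Measurable[pastSigma y (n + 1)] (y j) := by
    intro j hj
    refine Measurable.of_comap_le ?_
    exact le_iSup₂_of_le (f := fun j (_ : j ∈ Finset.range (n + 1 - 1)) =>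
      MeasurableSpace.comap (y j) inferInstance) j (by simpa using hj) le_rfl
  refine cond_of_indep (R := R) (S := fun ω => u (n + 1) ω - R ω) (Y := Y)
    (pastSigma y (n + 1)) ?_ ?_ (fun ω => by simp) genMeas.2.1.measurable genMean.2.1 genMean.2.2
    ?_ hind
  · refine iSup₂_le fun j hj => ?_
    have := Finset.mem_range.1 hj
    exact (genMeas.1 j (by omega)).measurable.comap_le
  · refine iSup₂_le fun j hj => ?_
    have hj' := Finset.mem_range.1 hj
    have h : VM (MeasS (MeasurableSpace.comap Y inferInstance)) (y j) := fun i =>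
      (measurable_pi_apply ((⟨j, by omega⟩ : Fin n), i)).comp (comap_measurable Y)
    exact (@measurable_iff_comap_le _ _ _ _ _).1 h.measurable
  · have ty : ∀ j < n, VM (MeasS (pastSigma y (n + 1))) (y j) := fun j hj => vm_meas (hpast j hj)
    have txp : VM (MeasS (pastSigma y (n + 1))) (xpred A B C V W P0 u y n) :=
      (clos_y hcl _ n ty).2 n le_rfl
    refine VM.measurable (VM.congr ?_ hS2)
    refine VM.add (VM.add (VM.mulVec _ (VM.mulVec _ (VM.add (txp.mulVec _) (VM.mulVec _
      (VM.add (VM.add (VM.mulVec _ (txp.mulVec _)) ?_) (VM.sum _ fun j hj => ?_))))))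
      (VM.mulVec _ (txp.mulVec _))) (VM.sum _ fun j hj => ?_)
    · split_ifs
      · exact (ty _ (by omega)).mulVec _
      · exact VM.zero
    · have := Finset.mem_range.1 hj
      exact (ty j (by omega)).mulVec _
    · exact (ty j (Finset.mem_range.1 hj)).mulVec _

end
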